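/- For the win-lose game G = G(Ĝ, φ) constructed from an r-player win-lose game Ĝ with the positive utility property and a 3SAT formula φ with n ≥ 4 variables: if φ is unsatisfiable, then NE(G(Ĝ, φ)) = NE(Ĝ), i.e., the Nash equilibria of G are exactly the Nash equilibria of Ĝ (identified with mixed profiles of G supported on gadget strategies). -/

import Mathlib

open Finset

/-! ## Basic notions for finite strategic games -/

/-- `x` is a probability distribution on the finite type `α`. -/
def IsDist {α : Type*} [Fintype α] (x : α → ℝ) : Prop :=
  (∀ s, 0 ≤ x s) ∧ ∑ s, x s = 1

/-- Expected utility of player `i` in the mixed profile `σ`. -/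
noncomputable def EU {ι : Type*} [Fintype ι] [DecidableEq ι] {S : ι → Type*}
    [∀ i, Fintype (S i)] (U : (i : ι) → (∀ j, S j) → ℝ)
    (σ : ∀ j, S j → ℝ) (i : ι) : ℝ :=
  ∑ s : ∀ j, S j, (∏ j, σ j (s j)) * U i s

/-- `σ` is a (mixed) Nash equilibrium of the game with utilities `U`. -/
def IsNashEq {ι : Type*} [Fintype ι] [DecidableEq ι] {S : ι → Type*} [∀ i, Fintype (S i)]
    (U : (i : ι) → (∀ j, S j) → ℝ) (σ : ∀ j, S j → ℝ) : Prop :=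
  (∀ i, IsDist (σ i)) ∧
    ∀ (i : ι) (τ : S i → ℝ), IsDist τ →
      EU U (Function.update σ i τ) i ≤ EU U σ i

/-! ## The player and strategy sets of the game `G(Ĝ, φ)` -/

/-- The players: the two special players (`Sum.inl`), plus `k` further players. -/
abbrev Player (k : ℕ) : Type := Fin 2 ⊕ Fin k

/-- A literal `ℓ_j` (second component `true`) or `ℓ̄_j` (second component `false`). -/
abbrev Lit (n : ℕ) : Type := Fin n × Bool

/-- A pair variable `v_{j,k}` with `j ≠ k`. -/
abbrev PairVar (n : ℕ) : Type := {p : Fin n × Fin n // p.1 ≠ p.2}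

/-- The non-gadget strategies of a special player: literals, clauses and pair variables. -/
abbrev SpecialAux (n m : ℕ) : Type := Lit n ⊕ (Fin m ⊕ PairVar n)

/-- The strategy set of each player of `G(Ĝ, φ)`: gadget strategies together with the
literals, clauses and pair variables (for the special players), resp. the single extra
strategy `δ` (for the non-special players). -/
def Strat {k : ℕ} (Shat : Player k → Type) (n m : ℕ) : Player k → Type
  | .inl p => Shat (.inl p) ⊕ SpecialAux n m
  | .inr q => Shat (.inr q) ⊕ PUnit

instance {k n m : ℕ} (Shat : Player k → Type) [∀ i, Fintype (Shat i)]
    (i : Player k) : Fintype (Strat Shat n m i) := by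
  cases i with
  | inl p => exact inferInstanceAs (Fintype (Shat (.inl p) ⊕ SpecialAux n m))
  | inr q => exact inferInstanceAs (Fintype (Shat (.inr q) ⊕ PUnit))

/-- The gadget strategy underlying a strategy of `G(Ĝ, φ)`, if any. -/
def toGadget {k n m : ℕ} (Shat : Player k → Type) :
    ∀ i : Player k, Strat Shat n m i → Option (Shat i)
  | .inl _, .inl a => some a
  | .inl _, .inr _ => none
  | .inr _, .inl a => some a
  | .inr _, .inr _ => none

/-- The strategy chosen by the special player `q` in the profile `s`. -/
def specialOf {k n m : ℕ} (Shat : Player k → Type) (q : Fin 2)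
    (s : ∀ j, Strat Shat n m j) : Shat (.inl q) ⊕ SpecialAux n m :=
  s (.inl q)

/-- The other special player. -/
def otherP : Fin 2 → Fin 2 := fun p => if p = 0 then 1 else 0

/-- Whether a strategy of a special player lies in `{ℓ₀, ℓ̄₀, ℓ₁, ℓ̄₁} ∪ 𝒞 ∪ V`
(Case (10) of the utility table). -/
def allowedB {n m : ℕ} {α : Type*} : α ⊕ SpecialAux n m → Bool
  | .inl _ => false
  | .inr (.inl l) => decide (l.1.val ≤ 1)
  | .inr (.inr _) => true

/-- Utilities ⟨player 1, player 2, each non-special player⟩ in a profile in which the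
special players choose the non-gadget strategies `a₁`, `a₂` and every non-special player
chooses `δ` (Cases (1)–(6) and part of Case (11) of the utility table).  The cyclic
difference `I(ℓ′) − I(ℓ)` is computed as `(I(ℓ′) + n − I(ℓ)) % n`. -/
noncomputable def pairU {n m : ℕ} (Cl : Fin m → Finset (Lit n)) :
    SpecialAux n m → SpecialAux n m → ℝ × ℝ × ℝ
  | .inl l, .inl l' =>
      if l' = (l.1, !l.2) then (0, 0, 1)
      else if (l'.1.val + n - l.1.val) % n ≤ 1 then (1, 0, 1)
      else if (l'.1.val + n - l.1.val) % n ≤ 3 then (0, 1, 1)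
      else (0, 0, 1)
  | .inl l, .inr (.inl c) => if (l.1, !l.2) ∈ Cl c then (0, 1, 1) else (0, 0, 0)
  | .inl l, .inr (.inr v) => if l.1 = v.1.1 ∨ l.1 = v.1.2 then (0, 1, 1) else (0, 0, 0)
  | .inr (.inl c), .inl l => if (l.1, !l.2) ∈ Cl c then (1, 0, 1) else (0, 0, 0)
  | .inr (.inr v), .inl l => if l.1 = v.1.1 ∨ l.1 = v.1.2 then (1, 0, 1) else (0, 0, 0)
  | .inr _, .inr _ => (0, 0, 0)

/-- The utility function of the game `G(Ĝ, φ)`, following Cases (1)–(11) of the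
utility table. -/
noncomputable def BigU {k n m : ℕ} (Shat : Player k → Type) [∀ i, Fintype (Shat i)]
    (Uhat : (i : Player k) → (∀ j, Shat j) → ℝ) (Cl : Fin m → Finset (Lit n))
    (i : Player k) (s : ∀ j, Strat Shat n m j) : ℝ :=
  -- Case (7): all players choose gadget strategies
  if h : ∀ j, (toGadget Shat j (s j)).isSome = true then
    Uhat i (fun j => (toGadget Shat j (s j)).get (h j))
  -- Case (8): at least two, but not all, players choose gadget strategies
  else if 1 < (univ.filter fun j => (toGadget Shat j (s j)).isSome = true).card then
    if (toGadget Shat i (s i)).isSome then 1 else 0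
  -- Cases (9), (10), (11): exactly one player chooses a gadget strategy
  else if (univ.filter fun j => (toGadget Shat j (s j)).isSome = true).card = 1 then
    if (toGadget Shat i (s i)).isSome then
      match i with
      | .inl p => if allowedB (specialOf Shat (otherP p) s) then 1 else 0
      | .inr _ => 1
    else 0
  -- Cases (1)–(6), (11): no player chooses a gadget strategy, so every non-special
  -- player chooses `δ` and the special players choose non-gadget strategies
  else
    match specialOf Shat 0 s, specialOf Shat 1 s with
    | .inr a₁, .inr a₂ =>
        (match i with
         | .inl p => if p = 0 then (pairU Cl a₁ a₂).1 else (pairU Cl a₁ a₂).2.1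
         | .inr _ => (pairU Cl a₁ a₂).2.2)
    | _, _ => 0

/-- A mixed profile of the gadget game `Ĝ`, regarded as a mixed profile of `G(Ĝ, φ)`
via the inclusions `Σ̂ᵢ ⊆ Σᵢ`. -/
def liftProfile {k n m : ℕ} (Shat : Player k → Type)
    (σh : ∀ i, Shat i → ℝ) : ∀ i, Strat Shat n m i → ℝ
  | .inl p => Sum.elim (σh (.inl p)) (fun _ => 0)
  | .inr q => Sum.elim (σh (.inr q)) (fun _ => 0)

/-- The strategy "literal `(j, b)`" of the special player `p`. -/
def litStrat {k n m : ℕ} (Shat : Player k → Type) (p : Fin 2) (j : Fin n) (b : Bool) :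
    Strat Shat n m (Sum.inl p) :=
  Sum.inr (Sum.inl (j, b))

/-- The strategy `δ` of the non-special player `q`. -/
def deltaStrat {k n m : ℕ} (Shat : Player k → Type) (q : Fin k) :
    Strat Shat n m (Sum.inr q) :=
  Sum.inr PUnit.unit

/-- The assignment `γ` satisfies the 3SAT formula with clauses `Cl`. -/
def Satisfies {n m : ℕ} (Cl : Fin m → Finset (Lit n)) (γ : Fin n → Bool) : Prop :=
  ∀ c, ∃ l ∈ Cl c, γ l.1 = l.2

/-! ### The combinatorial core -/

lemma core_top {n : ℕ} (Y : Fin n → ℝ) (j k p : Fin n)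
    (h : ∀ a b : Fin n, a ≠ b → Y a + Y b ≤ Y j + Y k) (hp : p ≠ k) : Y p ≤ Y j := by
  have := h p k hp
  linarith

lemma core_top' {n : ℕ} (Y : Fin n → ℝ) (j k p : Fin n)
    (h : ∀ a b : Fin n, a ≠ b → Y a + Y b ≤ Y j + Y k) (hp : p ≠ j) : Y p ≤ Y k := by
  have := h p j hp
  linarith

lemma core_two {n : ℕ} (Y : Fin n → ℝ) (j k p q : Fin n)
    (h : ∀ a b : Fin n, a ≠ b → Y a + Y b ≤ Y j + Y k) (hpq : p ≠ q)
    (hp : 0 < Y p) (hq : 0 < Y q) : 0 < Y j ∧ 0 < Y k := by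
  constructor
  · by_cases hpk : p = k
    · have := core_top Y j k q h (fun e => hpq (hpk.trans e.symm)); linarith
    · have := core_top Y j k p h hpk; linarith
  · by_cases hpk : p = j
    · have := core_top' Y j k q h (fun e => hpq (hpk.trans e.symm)); linarith
    · have := core_top' Y j k p h hpk; linarith

/-- cyclic shift -/
def cyc {n : ℕ} (d : ℕ) (j : Fin n) : Fin n :=
  ⟨(j.val + d) % n, Nat.mod_lt _ (lt_of_le_of_lt (Nat.zero_le _) j.isLt)⟩

lemma cyc_cyc {n : ℕ} (d e : ℕ) (j : Fin n) : cyc d (cyc e j) = cyc (e + d) j := by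
  simp [cyc, Nat.add_assoc]

lemma cyc_add_n {n : ℕ} (d : ℕ) (j : Fin n) : cyc (d + n) j = cyc d j := by
  simp [cyc, ← Nat.add_assoc]

lemma cyc_self {n : ℕ} (j : Fin n) : cyc n j = j := by
  apply Fin.ext; simp [cyc, Nat.mod_eq_of_lt j.isLt]

lemma cyc_zero {n : ℕ} (j : Fin n) : cyc 0 j = j := by
  apply Fin.ext; simp [cyc, Nat.mod_eq_of_lt j.isLt]

lemma cyc_inj {n : ℕ} (d e : ℕ) (j : Fin n) (hd : d < n) (he : e < n)
    (h : cyc d j = cyc e j) : d = e := by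
  have h1 : (j.val + d) % n = (j.val + e) % n := congrArg Fin.val h
  have h2 : d ≡ e [MOD n] := Nat.ModEq.add_left_cancel' j.val h1
  exact Nat.ModEq.eq_of_lt_of_lt h2 hd he

lemma core_const {n : ℕ} (hn : 4 ≤ n) (X Y : Fin n → ℝ) (hY : ∀ j, 0 ≤ Y j)
    (hX1 : ∃ j, 0 < X j) (hY1 : ∃ j, 0 < Y j)
    (h1 : ∀ j, 0 < X j → ∀ a b : Fin n, a ≠ b → Y a + Y b ≤ Y j + Y (cyc 1 j))
    (h2 : ∀ i j, 0 < Y i → i = cyc 3 j → ∀ a b : Fin n, a ≠ b →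
      X a + X b ≤ X j + X (cyc 1 j)) :
    (∀ j, 0 < X j) ∧ ∃ t, 0 < t ∧ ∀ j, Y j = t := by
  have hne : ∀ (j : Fin n) (d e : ℕ), d < 4 → e < 4 → d ≠ e → cyc d j ≠ cyc e j :=
    fun j d e hd he hde h => hde (cyc_inj d e j (by omega) (by omega) h)
  have hne0 : ∀ (j : Fin n) (e : ℕ), e < 4 → 0 ≠ e → j ≠ cyc e j := by
    intro j e he h0
    have := hne j 0 e (by omega) he h0
    rwa [cyc_zero] at this
  -- preimage under the shift by three
  have pre : ∀ (d : ℕ), d < 4 → ∀ i : Fin n, ∃ j, i = cyc d j := by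
    intro d hd i
    refine ⟨cyc (n - d) i, ?_⟩
    rw [cyc_cyc, show n - d + d = n by omega, cyc_self]
  have key : ∀ j i, 0 < X j → 0 < Y i → i = cyc 3 j ∨ i = cyc 2 j ∨ ∃ p, p ≠ j ∧ 0 < X p := by
    intro j i hj hi
    obtain ⟨l, hl⟩ := pre 3 (by omega) i
    by_cases e1 : l = j
    · left; rw [hl, e1]
    by_cases e2 : cyc 1 l = j
    · right; left; rw [hl, ← e2, cyc_cyc]
    · right; right
      have := core_top X l (cyc 1 l) j (h2 i l hi hl) (fun h => e2 h.symm)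
      exact ⟨l, e1, by linarith⟩
  -- two positive indices for X
  have two : ∀ j, 0 < X j → ∃ p, p ≠ j ∧ 0 < X p := by
    intro j hj
    by_contra hcon
    have hz : ∀ i, i ≠ cyc 3 j → i ≠ cyc 2 j → Y i = 0 := by
      intro i a b
      by_contra hi
      have hi' : 0 < Y i := lt_of_le_of_ne (hY i) (Ne.symm hi)
      rcases key j i hj hi' with h | h | h
      · exact a h
      · exact b h
      · exact hcon h
    have z1 := hz j (hne0 j 3 (by omega) (by omega)) (hne0 j 2 (by omega) (by omega))
    have z2 := hz (cyc 1 j) (hne j 1 3 (by omega) (by omega) (by omega))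
      (hne j 1 2 (by omega) (by omega) (by omega))
    obtain ⟨i, hi⟩ := hY1
    have hij : i ≠ j := by intro e; rw [e] at hi; linarith
    have := h1 j hj i j hij
    linarith
  obtain ⟨j0, hj0⟩ := hX1
  obtain ⟨j1, hj1, hj1'⟩ := two j0 hj0
  have back : ∀ l, 0 < Y (cyc 3 l) → 0 < X l ∧ 0 < X (cyc 1 l) := by
    intro l hl
    exact core_two X l (cyc 1 l) j0 j1 (h2 _ l hl rfl) hj1.symm hj0 hj1'
  -- two positive indices for Y
  have twoY : ∃ p q, p ≠ q ∧ 0 < Y p ∧ 0 < Y q := by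
    by_contra hcon
    obtain ⟨i, hi⟩ := hY1
    have hz : ∀ p, p ≠ i → Y p = 0 := by
      intro p hp
      by_contra h
      exact hcon ⟨p, i, hp, lt_of_le_of_ne (hY p) (Ne.symm h), hi⟩
    obtain ⟨l, hl⟩ := pre 3 (by omega) i
    have hx := (back l (hl ▸ hi)).1
    have := core_top Y l (cyc 1 l) i (h1 l hx) (by rw [hl]; exact hne l 3 1 (by omega) (by omega) (by omega))
    have := hz l (by rw [hl]; exact hne0 l 3 (by omega) (by omega))
    linarith
  obtain ⟨p, q, hpq, hp, hq⟩ := twoY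
  have fwd : ∀ j, 0 < X j → 0 < Y j ∧ 0 < Y (cyc 1 j) :=
    fun j hj => core_two Y j (cyc 1 j) p q (h1 j hj) hpq hp hq
  have step : ∀ l, 0 < X (cyc 3 l) → 0 < X (cyc 1 l) ∧ 0 < X (cyc 2 l) := by
    intro l hl
    have a := (fwd _ hl).2
    rw [cyc_cyc] at a
    have := back (cyc 1 l) (by rw [cyc_cyc]; exact a)
    rwa [cyc_cyc] at this
  have step1 : ∀ l, 0 < X (cyc 1 l) → 0 < X l := by
    intro l hl
    obtain ⟨m, hm⟩ := pre 2 (by omega) l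
    rw [hm, cyc_cyc] at hl
    rw [hm]; exact (step m hl).2
  have all : ∀ d l, 0 < X (cyc d l) → 0 < X l := by
    intro d
    induction d with
    | zero => intro l h; rwa [cyc_zero] at h
    | succ d ih =>
      intro l h
      apply ih; apply step1; rwa [cyc_cyc]
  have hall : ∀ l, 0 < X l := by
    intro l
    refine all (n - l.val + j0.val) l ?_
    convert hj0
    apply Fin.ext
    have := l.isLt
    simp only [cyc]
    rw [show l.val + (n - l.val + j0.val) = j0.val + n by omega, Nat.add_mod_right,
      Nat.mod_eq_of_lt j0.isLt]
  refine ⟨hall, Y j0, (fwd j0 hj0).1, ?_⟩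
  have le1 : ∀ a j, Y a ≤ Y j := by
    intro a j
    by_cases h : a = cyc 1 j
    · obtain ⟨i, hi⟩ := pre 1 (by omega) j
      have := core_top' Y i (cyc 1 i) a (h1 i (hall i))
        (by rw [h, hi, cyc_cyc]; exact (hne0 i 2 (by omega) (by omega)).symm)
      rwa [← hi] at this
    · exact core_top Y j (cyc 1 j) a (h1 j (hall j)) h
  intro j
  exact le_antisymm (le1 _ _) (le1 _ _)

lemma diff_le_one {n : ℕ} (hn : 4 ≤ n) (j j' : Fin n) :
    (j'.val + n - j.val) % n ≤ 1 ↔ j' = j ∨ j' = cyc 1 j := by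
  have h1 := j.isLt
  have h2 := j'.isLt
  rw [Fin.ext_iff, Fin.ext_iff]
  simp only [cyc]
  rcases Nat.lt_or_ge j'.val j.val with h | h
  · rw [Nat.mod_eq_of_lt (by omega)]
    rcases Nat.lt_or_ge (j.val + 1) n with h3 | h3
    · rw [Nat.mod_eq_of_lt h3]; omega
    · rw [show j.val + 1 = n by omega, Nat.mod_self]; omega
  · rw [show j'.val + n - j.val = (j'.val - j.val) + n by omega, Nat.add_mod_right,
      Nat.mod_eq_of_lt (by omega)]
    rcases Nat.lt_or_ge (j.val + 1) n with h3 | h3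
    · rw [Nat.mod_eq_of_lt h3]; omega
    · rw [show j.val + 1 = n by omega, Nat.mod_self]; omega

lemma diff_two_three {n : ℕ} (hn : 4 ≤ n) (j j' : Fin n) :
    (¬ (j'.val + n - j.val) % n ≤ 1 ∧ (j'.val + n - j.val) % n ≤ 3) ↔
      j' = cyc 3 j ∨ j' = cyc 2 j := by
  have h1 := j.isLt
  have h2 := j'.isLt
  have hm : ∀ d, d < 4 → (j.val + d) % n = if j.val + d < n then j.val + d else j.val + d - n := by
    intro d hd
    split_ifs with h
    · exact Nat.mod_eq_of_lt h
    · rw [Nat.mod_eq_sub_mod (by omega), Nat.mod_eq_of_lt (by omega)]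
  rw [Fin.ext_iff, Fin.ext_iff]
  simp only [cyc]
  rw [hm 3 (by omega), hm 2 (by omega)]
  rcases Nat.lt_or_ge j'.val j.val with h | h
  · rw [Nat.mod_eq_of_lt (by omega)]
    split_ifs <;> omega
  · rw [show j'.val + n - j.val = (j'.val - j.val) + n by omega, Nat.add_mod_right,
      Nat.mod_eq_of_lt (by omega)]
    split_ifs <;> omega

/-- Total mass at a variable index. -/
def mass {n m : ℕ} (y : SpecialAux n m → ℝ) (j : Fin n) : ℝ :=
  y (.inl (j, true)) + y (.inl (j, false))

noncomputable def pay1 {n m : ℕ} (Cl : Fin m → Finset (Lit n)) (y : SpecialAux n m → ℝ)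
    (a : SpecialAux n m) : ℝ := ∑ b, y b * (pairU Cl a b).1

noncomputable def pay2 {n m : ℕ} (Cl : Fin m → Finset (Lit n)) (x : SpecialAux n m → ℝ)
    (b : SpecialAux n m) : ℝ := ∑ a, x a * (pairU Cl a b).2.1

lemma pay1_lit {n m : ℕ} (hn : 4 ≤ n) (Cl : Fin m → Finset (Lit n)) (y : SpecialAux n m → ℝ)
    (j : Fin n) (b : Bool) :
    pay1 Cl y (.inl (j, b)) = mass y j + mass y (cyc 1 j) - y (.inl (j, !b)) := by
  have hne : j ≠ cyc 1 j := by
    intro h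
    have := cyc_inj 0 1 j (by omega) (by omega) (by rwa [cyc_zero])
    omega
  unfold pay1
  rw [Fintype.sum_sum_type, Fintype.sum_prod_type]
  have hz : ∑ c : Fin m ⊕ PairVar n, y (.inr c) * (pairU Cl (.inl (j, b)) (.inr c)).1 = 0 := by
    apply Finset.sum_eq_zero
    rintro (c | c) -
    · simp only [pairU]; split_ifs <;> simp
    · simp only [pairU]; split_ifs <;> simp
  rw [hz, add_zero]
  have : ∀ j' : Fin n, ∑ b' : Bool,
      y (.inl (j', b')) * (pairU Cl (.inl (j, b)) (.inl (j', b'))).1 =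
      (if j' = j then mass y j - y (.inl (j, !b)) else 0)
        + (if j' = cyc 1 j then mass y (cyc 1 j) else 0) := by
    intro j'
    simp only [pairU, diff_le_one hn, Fintype.sum_bool]
    by_cases e : j' = j
    · subst e
      cases b <;> simp [mass, hne]
    · by_cases e2 : j' = cyc 1 j
      · subst e2
        simp [mass, hne.symm]
      · simp only [e, e2, false_or, if_false]
        cases b <;> simp [e] <;> split_ifs <;> simp
  simp only [this, Finset.sum_add_distrib, Finset.sum_ite_eq', Finset.mem_univ, if_true]
  ring

lemma pay1_var {n m : ℕ} (Cl : Fin m → Finset (Lit n)) (y : SpecialAux n m → ℝ)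
    (j k : Fin n) (h : j ≠ k) :
    pay1 Cl y (.inr (.inr ⟨(j, k), h⟩)) = mass y j + mass y k := by
  unfold pay1
  rw [Fintype.sum_sum_type, Fintype.sum_prod_type]
  have hz : ∑ c : Fin m ⊕ PairVar n,
      y (.inr c) * (pairU Cl (.inr (.inr ⟨(j, k), h⟩)) (.inr c)).1 = 0 := by
    apply Finset.sum_eq_zero
    rintro c -
    simp [pairU]
  rw [hz, add_zero]
  have : ∀ j' : Fin n, ∑ b' : Bool,
      y (.inl (j', b')) * (pairU Cl (.inr (.inr ⟨(j, k), h⟩)) (.inl (j', b'))).1 =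
      (if j' = j then mass y j else 0) + (if j' = k then mass y k else 0) := by
    intro j'
    simp only [pairU, Fintype.sum_bool]
    by_cases e : j' = j
    · subst e
      simp [mass, h]
    · by_cases e2 : j' = k
      · subst e2
        simp [mass, e]
      · simp [e, e2]
  simp only [this, Finset.sum_add_distrib, Finset.sum_ite_eq', Finset.mem_univ, if_true]

lemma pay2_var {n m : ℕ} (Cl : Fin m → Finset (Lit n)) (y : SpecialAux n m → ℝ)
    (j k : Fin n) (h : j ≠ k) :
    pay2 Cl y (.inr (.inr ⟨(j, k), h⟩)) = mass y j + mass y k := by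
  rw [← pay1_var Cl y j k h]
  unfold pay1 pay2
  apply Finset.sum_congr rfl
  rintro (l | c) -
  · simp only [pairU]; split_ifs <;> simp
  · simp [pairU]

lemma pay2_lit {n m : ℕ} (hn : 4 ≤ n) (Cl : Fin m → Finset (Lit n)) (x : SpecialAux n m → ℝ)
    (j : Fin n) (b : Bool) :
    pay2 Cl x (.inl (cyc 3 j, b)) = mass x j + mass x (cyc 1 j) := by
  have hinj : ∀ i i' : Fin n, ∀ d, cyc d i = cyc d i' → i = i' := by
    intro i i' d h
    have h1 : (i.val + d) % n = (i'.val + d) % n := congrArg Fin.val h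
    have h2 : i.val ≡ i'.val [MOD n] := Nat.ModEq.add_right_cancel' d h1
    exact Fin.ext (Nat.ModEq.eq_of_lt_of_lt h2 i.isLt i'.isLt)
  have hne : j ≠ cyc 1 j := by
    intro h
    have := cyc_inj 0 1 j (by omega) (by omega) (by rwa [cyc_zero])
    omega
  unfold pay2
  rw [Fintype.sum_sum_type, Fintype.sum_prod_type]
  have hz : ∑ c : Fin m ⊕ PairVar n, x (.inr c) * (pairU Cl (.inr c) (.inl (cyc 3 j, b))).2.1 = 0 := by
    apply Finset.sum_eq_zero
    rintro (c | c) -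
    · simp only [pairU]; split_ifs <;> simp
    · simp only [pairU]; split_ifs <;> simp
  rw [hz, add_zero]
  have : ∀ j' : Fin n, ∑ b' : Bool,
      x (.inl (j', b')) * (pairU Cl (.inl (j', b')) (.inl (cyc 3 j, b))).2.1 =
      (if j' = j then mass x j else 0)
        + (if j' = cyc 1 j then mass x (cyc 1 j) else 0) := by
    intro j'
    have e1 : cyc 3 j = cyc 3 j' ↔ j' = j :=
      ⟨fun h => (hinj _ _ _ h).symm, fun h => by rw [h]⟩
    have e2 : cyc 3 j = cyc 2 j' ↔ j' = cyc 1 j := by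
      rw [show cyc 3 j = cyc 2 (cyc 1 j) by rw [cyc_cyc]]
      exact ⟨fun h => (hinj _ _ _ h).symm, fun h => by rw [h]⟩
    have e3 := diff_two_three hn j' (cyc 3 j)
    rw [e1, e2] at e3
    have e4 := diff_le_one hn j' (cyc 3 j)
    have hval : ∀ b', (pairU Cl (.inl (j', b')) (.inl (cyc 3 j, b))).2.1 =
        if j' = j ∨ j' = cyc 1 j then 1 else 0 := by
      intro b'
      simp only [pairU]
      by_cases q1 : (cyc 3 j, b) = (j', !b')
      · have : cyc 3 j = j' := congrArg Prod.fst q1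
        have := e4.2 (Or.inl this)
        rw [if_pos q1, if_neg (fun h => (e3.2 h).1 this)]
      · rw [if_neg q1]
        by_cases q2 : ((cyc 3 j).val + n - j'.val) % n ≤ 1
        · rw [if_pos q2, if_neg (fun h => (e3.2 h).1 q2)]
        · rw [if_neg q2]
          by_cases q3 : ((cyc 3 j).val + n - j'.val) % n ≤ 3
          · rw [if_pos q3, if_pos (e3.1 ⟨q2, q3⟩)]
          · rw [if_neg q3, if_neg (fun h => q3 (e3.2 h).2)]
    simp only [hval, Fintype.sum_bool]
    by_cases e : j' = j
    · subst e
      simp [mass, hne]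
    · by_cases e2 : j' = cyc 1 j
      · subst e2
        simp [mass, hne.symm]
      · simp [e, e2]
  simp only [this, Finset.sum_add_distrib, Finset.sum_ite_eq', Finset.mem_univ, if_true]

lemma pay1_clause {n m : ℕ} (Cl : Fin m → Finset (Lit n)) (y : SpecialAux n m → ℝ)
    (c : Fin m) :
    pay1 Cl y (.inr (.inl c)) = ∑ l ∈ Cl c, y (.inl (l.1, !l.2)) := by
  unfold pay1
  rw [Fintype.sum_sum_type]
  have hz : ∑ c' : Fin m ⊕ PairVar n,
      y (.inr c') * (pairU Cl (.inr (.inl c)) (.inr c')).1 = 0 := by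
    apply Finset.sum_eq_zero
    rintro c -
    simp [pairU]
  rw [hz, add_zero]
  have h1 : ∀ l : Lit n, y (.inl l) * (pairU Cl (.inr (.inl c)) (.inl l)).1 =
      if (l.1, !l.2) ∈ Cl c then y (.inl l) else 0 := by
    intro l
    simp only [pairU]
    split_ifs <;> simp
  simp only [h1]
  rw [← Finset.sum_filter]
  refine Finset.sum_nbij' (fun l => (l.1, !l.2)) (fun l => (l.1, !l.2)) ?_ ?_ ?_ ?_ ?_ <;> simp

lemma core {n m : ℕ} (hn : 4 ≤ n) (Cl : Fin m → Finset (Lit n)) (h3 : ∀ c, (Cl c).card = 3)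
    (hunsat : ¬ ∃ γ : Fin n → Bool, Satisfies Cl γ)
    (x y : SpecialAux n m → ℝ) (hx : ∀ a, 0 ≤ x a) (hy : ∀ a, 0 ≤ y a)
    (hxl : ∃ l, 0 < x (.inl l)) (hyl : ∃ l, 0 < y (.inl l))
    (h1 : ∀ a a', 0 < x a → pay1 Cl y a' ≤ pay1 Cl y a)
    (h2 : ∀ a a', 0 < y a → pay2 Cl x a' ≤ pay2 Cl x a) : False := by
  have mass_nonneg : ∀ z : SpecialAux n m → ℝ, (∀ a, 0 ≤ z a) → ∀ j, 0 ≤ mass z j :=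
    fun z hz j => add_nonneg (hz _) (hz _)
  have mass_pos : ∀ z : SpecialAux n m → ℝ, (∀ a, 0 ≤ z a) → ∀ j b, 0 < z (.inl (j, b)) →
      0 < mass z j := by
    intro z hz j b h
    have a1 := hz (.inl (j, true))
    have a2 := hz (.inl (j, false))
    cases b <;> unfold mass <;> linarith
  have pos_mass : ∀ z : SpecialAux n m → ℝ, (∀ a, 0 ≤ z a) → ∀ j, 0 < mass z j →
      ∃ b, 0 < z (.inl (j, b)) := by
    intro z hz j h
    by_contra hc
    push Not at hc
    have a1 := hc true
    have a2 := hc false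
    unfold mass at h
    linarith
  obtain ⟨⟨jx, bx⟩, hjx⟩ := hxl
  obtain ⟨⟨jy, bry⟩, hjy⟩ := hyl
  obtain ⟨hall, t, ht, hYt⟩ := core_const hn (mass x) (mass y) (mass_nonneg y hy)
    ⟨jx, mass_pos x hx _ _ hjx⟩ ⟨jy, mass_pos y hy _ _ hjy⟩
    (by
      intro j hj a b hab
      obtain ⟨bb, hb⟩ := pos_mass x hx j hj
      have := h1 (.inl (j, bb)) (.inr (.inr ⟨(a, b), hab⟩)) hb
      rw [pay1_var, pay1_lit hn] at this
      have := hy (.inl (j, !bb))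
      linarith)
    (by
      intro i j hi hij a b hab
      obtain ⟨bb, hb⟩ := pos_mass y hy i hi
      have := h2 (.inl (i, bb)) (.inr (.inr ⟨(a, b), hab⟩)) hb
      rwa [pay2_var, hij, pay2_lit hn] at this)
  choose γ hγ using fun j => pos_mass x hx j (hall j)
  have hne : ∀ j : Fin n, j ≠ cyc 1 j := by
    intro j h
    have := cyc_inj 0 1 j (by omega) (by omega) (by rwa [cyc_zero])
    omega
  have hy0 : ∀ j, y (.inl (j, !γ j)) = 0 := by
    intro j
    have := h1 (.inl (j, γ j)) (.inr (.inr ⟨(j, cyc 1 j), hne j⟩)) (hγ j)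
    rw [pay1_var, pay1_lit hn] at this
    have := hy (.inl (j, !γ j))
    linarith
  have hy1 : ∀ j, y (.inl (j, γ j)) = t := by
    intro j
    have a1 := hy0 j
    have a2 := hYt j
    unfold mass at a2
    cases hg : γ j <;> rw [hg] at a1 <;> simp at a1 <;> linarith
  apply hunsat
  refine ⟨γ, ?_⟩
  intro c
  by_contra hc
  push Not at hc
  have := h1 (.inl (jx, γ jx)) (.inr (.inl c)) (hγ jx)
  rw [pay1_clause, pay1_lit hn, hYt, hYt, hy0] at this
  rw [Finset.sum_congr rfl (g := fun _ => t)] at this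
  · rw [Finset.sum_const, h3] at this
    norm_num at this
    linarith
  · intro l hl
    have e : (!l.2) = γ l.1 := by
      have := hc l hl
      revert this
      cases γ l.1 <;> cases l.2 <;> simp
    rw [e, hy1]

/-! ### Pure deviations in general games -/

section general
open Classical

variable {ι : Type*} [Fintype ι] [DecidableEq ι] {S : ι → Type*} [∀ i, Fintype (S i)]

/-- The point mass at `t`. -/
noncomputable def pt {α : Type*} (t : α) : α → ℝ := fun s => if s = t then 1 else 0

lemma pt_dist {α : Type*} [Fintype α] (t : α) : IsDist (pt t) := by
  refine ⟨fun s => ?_, ?_⟩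
  · unfold pt; split_ifs <;> norm_num
  · simp [pt]

/-- Expected utility of the pure deviation `t`. -/
noncomputable def PU (U : (i : ι) → (∀ j, S j) → ℝ) (σ : ∀ j, S j → ℝ) (i : ι) (t : S i) : ℝ :=
  EU U (Function.update σ i (pt t)) i

lemma prod_update (σ : ∀ j, S j → ℝ) (i : ι) (τ : S i → ℝ) (s : ∀ j, S j) :
    ∏ j, (Function.update σ i τ) j (s j) = τ (s i) * ∏ j ∈ univ.erase i, σ j (s j) := by
  rw [← Finset.mul_prod_erase univ _ (Finset.mem_univ i), Function.update_self]
  congr 1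
  apply Finset.prod_congr rfl
  intro j hj
  rw [Function.update_of_ne (Finset.ne_of_mem_erase hj)]

lemma EU_update (U : (i : ι) → (∀ j, S j) → ℝ) (σ : ∀ j, S j → ℝ) (i : ι) (τ : S i → ℝ) :
    EU U (Function.update σ i τ) i = ∑ t, τ t * PU U σ i t := by
  unfold PU EU
  simp only [prod_update, Finset.mul_sum]
  rw [Finset.sum_comm]
  apply Finset.sum_congr rfl
  intro s _
  rw [Finset.sum_eq_single (s i)]
  · simp [pt]; ring
  · intro t _ ht
    simp [pt, Ne.symm ht]
  · simp

lemma EU_eq (U : (i : ι) → (∀ j, S j) → ℝ) (σ : ∀ j, S j → ℝ) (i : ι) :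
    EU U σ i = ∑ t, σ i t * PU U σ i t := by
  rw [← EU_update, Function.update_eq_self]

lemma nash_of_pure (U : (i : ι) → (∀ j, S j) → ℝ) (σ : ∀ j, S j → ℝ) (hd : ∀ i, IsDist (σ i))
    (h : ∀ i t, PU U σ i t ≤ EU U σ i) : IsNashEq U σ := by
  refine ⟨hd, fun i τ hτ => ?_⟩
  rw [EU_update]
  calc ∑ t, τ t * PU U σ i t ≤ ∑ t, τ t * EU U σ i :=
        Finset.sum_le_sum fun t _ => mul_le_mul_of_nonneg_left (h i t) (hτ.1 t)
    _ = EU U σ i := by rw [← Finset.sum_mul, hτ.2, one_mul]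

lemma nash_pure (U : (i : ι) → (∀ j, S j) → ℝ) (σ : ∀ j, S j → ℝ) (h : IsNashEq U σ)
    (i : ι) (t : S i) : PU U σ i t ≤ EU U σ i := h.2 i _ (pt_dist t)

lemma nash_best (U : (i : ι) → (∀ j, S j) → ℝ) (σ : ∀ j, S j → ℝ) (h : IsNashEq U σ)
    (i : ι) (t t' : S i) (ht : 0 < σ i t) : PU U σ i t' ≤ PU U σ i t := by
  by_contra hc
  push Not at hc
  have hlt : PU U σ i t < EU U σ i := lt_of_lt_of_le hc (nash_pure U σ h i t')
  have : EU U σ i < ∑ t, σ i t * EU U σ i := by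
    conv_lhs => rw [EU_eq]
    apply Finset.sum_lt_sum
    · intro s _
      exact mul_le_mul_of_nonneg_left (nash_pure U σ h i s) ((h.1 i).1 s)
    · exact ⟨t, Finset.mem_univ _, mul_lt_mul_of_pos_left hlt ht⟩
  rw [← Finset.sum_mul, (h.1 i).2, one_mul] at this
  exact lt_irrefl _ this

lemma PU_zero (U : (i : ι) → (∀ j, S j) → ℝ) (σ : ∀ j, S j → ℝ) (i : ι) (t : S i)
    (h : ∀ s, s i = t → (∀ j, j ≠ i → σ j (s j) ≠ 0) → U i s = 0) : PU U σ i t = 0 := by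
  unfold PU EU
  apply Finset.sum_eq_zero
  intro s _
  rw [prod_update]
  by_cases h1 : s i = t
  · by_cases h2 : ∀ j, j ≠ i → σ j (s j) ≠ 0
    · rw [h s h1 h2, mul_zero]
    · push Not at h2
      obtain ⟨j, hj, h0⟩ := h2
      rw [Finset.prod_eq_zero (Finset.mem_erase.2 ⟨hj, Finset.mem_univ _⟩) h0]
      ring
  · simp [pt, h1]

lemma PU_pos (U : (i : ι) → (∀ j, S j) → ℝ) (hU : ∀ i s, 0 ≤ U i s) (σ : ∀ j, S j → ℝ)
    (hσ : ∀ j s, 0 ≤ σ j s) (i : ι) (t : S i) (s : ∀ j, S j) (h1 : s i = t)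
    (h2 : ∀ j, j ≠ i → 0 < σ j (s j)) (h3 : 0 < U i s) : 0 < PU U σ i t := by
  unfold PU EU
  apply Finset.sum_pos'
  · intro s _
    rw [prod_update]
    refine mul_nonneg (mul_nonneg ((pt_dist t).1 _) (Finset.prod_nonneg fun j _ => hσ _ _)) (hU _ _)
  · refine ⟨s, Finset.mem_univ _, ?_⟩
    rw [prod_update]
    refine mul_pos (mul_pos (by simp [pt, h1]) (Finset.prod_pos ?_)) h3
    intro j hj
    exact h2 j (Finset.ne_of_mem_erase hj)

lemma dist_exists_pos {α : Type*} [Fintype α] (x : α → ℝ) (h : IsDist x) : ∃ s, 0 < x s := by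
  by_contra hc
  push Not at hc
  have := Finset.sum_nonpos (s := univ) fun s _ => hc s
  rw [h.2] at this
  linarith

end general

/-! ### The utilities of the constructed game -/

section big

variable {k n m : ℕ} (Shat : Player k → Type)

/-- Inclusion of the gadget strategies. -/
def emb : ∀ i : Player k, Shat i → Strat Shat n m i
  | .inl _, a => Sum.inl a
  | .inr _, a => Sum.inl a

@[simp] lemma toGadget_emb (i : Player k) (a : Shat i) :
    toGadget (n := n) (m := m) Shat i (emb Shat i a) = some a := by
  cases i <;> rfl

lemma emb_of_toGadget (i : Player k) (t : Strat Shat n m i) (a : Shat i)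
    (h : toGadget Shat i t = some a) : t = emb Shat i a := by
  cases i <;> rcases t with t | t <;> simp [toGadget] at h <;> subst h <;> rfl

lemma emb_inj (i : Player k) (a b : Shat i)
    (h : emb (n := n) (m := m) Shat i a = emb Shat i b) : a = b := by
  have := congrArg (toGadget Shat i) h
  simpa using this

lemma lift_emb (σh : ∀ i, Shat i → ℝ) (i : Player k) (a : Shat i) :
    liftProfile (n := n) (m := m) Shat σh i (emb Shat i a) = σh i a := by
  cases i <;> rfl

lemma lift_none (σh : ∀ i, Shat i → ℝ) (i : Player k) (t : Strat Shat n m i)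
    (h : toGadget Shat i t = none) : liftProfile Shat σh i t = 0 := by
  cases i <;> rcases t with t | t <;> simp [toGadget] at h <;> rfl

lemma cases_strat (i : Player k) (t : Strat Shat n m i) :
    (∃ a, t = emb Shat i a) ∨ toGadget Shat i t = none := by
  rcases h : toGadget Shat i t with _ | a
  · right; rfl
  · left; exact ⟨a, emb_of_toGadget Shat i t a h⟩

variable [∀ i, Fintype (Shat i)] (Uhat : (i : Player k) → (∀ j, Shat j) → ℝ)
  (Cl : Fin m → Finset (Lit n))

lemma sum_strat_eq (i : Player k) (f : Strat Shat n m i → ℝ)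
    (hf : ∀ t, toGadget Shat i t = none → f t = 0) :
    ∑ a, f (emb Shat i a) = ∑ t, f t := by
  refine Fintype.sum_of_injective (emb Shat i) (fun a b h => emb_inj Shat i a b h) _ _ ?_
    (fun _ => rfl)
  intro t ht
  rcases cases_strat Shat i t with ⟨a, rfl⟩ | h
  · exact absurd ⟨a, rfl⟩ ht
  · exact hf t h

lemma lift_dist (σh : ∀ i, Shat i → ℝ) (i : Player k) :
    IsDist (liftProfile (n := n) (m := m) Shat σh i) ↔ IsDist (σh i) := by
  have hs := sum_strat_eq Shat i (liftProfile (n := n) (m := m) Shat σh i)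
    (lift_none Shat σh i)
  simp only [lift_emb] at hs
  unfold IsDist
  rw [hs]
  refine and_congr_left fun _ => ⟨fun h a => ?_, fun h t => ?_⟩
  · rw [← lift_emb (n := n) (m := m) Shat σh i a]; exact h _
  · rcases cases_strat Shat i t with ⟨a, rfl⟩ | h'
    · rw [lift_emb]; exact h a
    · rw [lift_none _ _ _ _ h']

lemma BigU_all (i : Player k) (s : ∀ j, Shat j) :
    BigU Shat Uhat Cl i (fun j => emb Shat j (s j)) = Uhat i s := by
  unfold BigU
  rw [dif_pos (by intro j; simp)]
  congr 1
  funext j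
  simp

lemma BigU_none (i j : Player k) (s : ∀ j, Strat Shat n m j)
    (hi : toGadget Shat i (s i) = none) (hj : (toGadget Shat j (s j)).isSome = true) :
    BigU Shat Uhat Cl i s = 0 := by
  unfold BigU
  rw [dif_neg (by intro h; have := h i; simp [hi] at this)]
  have : 0 < (univ.filter fun j => (toGadget Shat j (s j)).isSome = true).card :=
    Finset.card_pos.2 ⟨j, by simp [hj]⟩
  split_ifs with h1 h2 h3 h4 <;> first | rfl | (simp [hi] at *; done) | omega

lemma BigU_one (i : Player k) (s : ∀ j, Strat Shat n m j)
    (hi : (toGadget Shat i (s i)).isSome = true)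
    (hnot : ¬ ∀ j, (toGadget Shat j (s j)).isSome = true)
    (h : (∃ j, j ≠ i ∧ (toGadget Shat j (s j)).isSome = true) ∨
      (∃ p, i = .inl p ∧ allowedB (specialOf Shat (otherP p) s) = true)) :
    BigU Shat Uhat Cl i s = 1 := by
  unfold BigU
  rw [dif_neg hnot]
  have hpos : 0 < (univ.filter fun j => (toGadget Shat j (s j)).isSome = true).card :=
    Finset.card_pos.2 ⟨i, by simp [hi]⟩
  by_cases hc : 1 < (univ.filter fun j => (toGadget Shat j (s j)).isSome = true).card
  · rw [if_pos hc, if_pos hi]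
  · rw [if_neg hc, if_pos (by omega), if_pos hi]
    rcases h with ⟨j, hj, hj'⟩ | ⟨p, rfl, hp⟩
    · exact absurd (Finset.one_lt_card.2 ⟨j, by simp [hj'], i, by simp [hi], hj⟩) hc
    · simp [hp]

lemma BigU_nonneg (hWL : ∀ i s, Uhat i s = 0 ∨ Uhat i s = 1) (i : Player k)
    (s : ∀ j, Strat Shat n m j) : 0 ≤ BigU Shat Uhat Cl i s := by
  have hp : ∀ a b : SpecialAux n m, 0 ≤ (pairU Cl a b).1 ∧ 0 ≤ (pairU Cl a b).2.1 ∧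
      0 ≤ (pairU Cl a b).2.2 := by
    rintro (a | a | a) (b | b | b) <;> simp only [pairU] <;> (try split_ifs) <;> norm_num
  unfold BigU
  split_ifs with h0
  · rcases hWL i (fun j => (toGadget Shat j (s j)).get (h0 j)) with h | h <;> simp [h]
  · norm_num
  · norm_num
  · cases i with
    | inl p => dsimp only; split_ifs <;> norm_num
    | inr q => norm_num
  · norm_num
  · split
    · cases i with
      | inl p =>
        dsimp only
        split_ifs
        · exact (hp _ _).1
        · exact (hp _ _).2.1
      | inr q => exact (hp _ _).2.2
    · norm_num

/-- The profile in which the special players play `a`, `b` and the others `δ`. -/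
def prof (a b : SpecialAux n m) : ∀ j, Strat Shat n m j
  | .inl p => if p = 0 then Sum.inr a else Sum.inr b
  | .inr _ => Sum.inr PUnit.unit

lemma prof_none (a b : SpecialAux n m) (j : Player k) :
    toGadget Shat j (prof Shat a b j) = none := by
  cases j with
  | inl p =>
    by_cases h : p = 0
    · simp only [prof, h, if_true]; rfl
    · simp only [prof, h, if_false]; rfl
  | inr q => rfl

lemma eq_prof (s : ∀ j, Strat Shat n m j) (h : ∀ j, toGadget Shat j (s j) = none) :
    ∃ a b, s = prof Shat a b ∧ s (.inl 0) = Sum.inr a ∧ s (.inl 1) = Sum.inr b := by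
  have h' : ∀ p, ∃ a, s (.inl p) = Sum.inr a := by
    intro p
    have := h (.inl p)
    rcases hs : s (.inl p) with a | a
    · rw [hs] at this; simp [toGadget] at this
    · exact ⟨a, rfl⟩
  obtain ⟨a, ha⟩ := h' 0
  obtain ⟨b, hb⟩ := h' 1
  refine ⟨a, b, ?_, ha, hb⟩
  funext j
  rcases j with p | q
  · fin_cases p
    · exact ha
    · exact hb
  · have := h (.inr q)
    rcases hs : s (.inr q) with a | a
    · rw [hs] at this; simp [toGadget] at this
    · rfl

lemma BigU_prof (a b : SpecialAux n m) :
    BigU Shat Uhat Cl (.inl 0) (prof Shat a b) = (pairU Cl a b).1 ∧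
    BigU Shat Uhat Cl (.inl 1) (prof Shat a b) = (pairU Cl a b).2.1 := by
  have hc : (univ.filter fun j => (toGadget Shat j (prof Shat a b j)).isSome = true).card = 0 := by
    rw [Finset.card_eq_zero, Finset.filter_eq_empty_iff]
    intro j _
    simp [prof_none]
  have e0 : specialOf Shat 0 (prof Shat a b) = Sum.inr a := rfl
  have e1 : specialOf Shat 1 (prof Shat a b) = Sum.inr b := rfl
  constructor
  · unfold BigU
    rw [dif_neg (by intro h; have := h (.inl 0); simp [prof_none] at this), if_neg (by omega),
      if_neg (by omega), e0, e1]
    simp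
  · unfold BigU
    rw [dif_neg (by intro h; have := h (.inl 0); simp [prof_none] at this), if_neg (by omega),
      if_neg (by omega), e0, e1]
    simp

lemma EU_lift (σh : ∀ i, Shat i → ℝ) (i : Player k) :
    EU (BigU Shat Uhat Cl) (liftProfile Shat σh) i = EU Uhat σh i := by
  symm
  unfold EU
  refine Fintype.sum_of_injective (fun s j => emb Shat j (s j)) ?_ _ _ ?_ ?_
  · intro s s' h
    funext j
    exact emb_inj Shat j _ _ (congrFun h j)
  · intro s hs
    by_cases h : ∃ j, toGadget Shat j (s j) = none
    · obtain ⟨j, hj⟩ := h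
      rw [Finset.prod_eq_zero (Finset.mem_univ j) (lift_none Shat σh j _ hj), zero_mul]
    · exfalso
      push Not at h
      have : ∀ j, ∃ a, s j = emb Shat j a := by
        intro j
        rcases cases_strat Shat j (s j) with h' | h'
        · exact h'
        · exact absurd h' (h j)
      choose a ha using this
      exact hs ⟨a, by funext j; exact (ha j).symm⟩
  · intro s
    simp only [lift_emb]
    rw [BigU_all]

lemma PU_lift (σh : ∀ i, Shat i → ℝ) (i : Player k) (a : Shat i) :
    PU (BigU Shat Uhat Cl) (liftProfile Shat σh) i (emb Shat i a) = PU Uhat σh i a := by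
  unfold PU
  rw [← EU_lift Shat Uhat Cl]
  congr 1
  funext j t
  by_cases h : j = i
  · subst h
    rw [Function.update_self]
    rcases cases_strat Shat j t with ⟨b, rfl⟩ | h'
    · rw [lift_emb, Function.update_self]
      unfold pt
      congr 1
      exact propext ⟨fun h => emb_inj Shat _ _ _ h, fun h => by rw [h]⟩
    · rw [lift_none _ _ _ _ h']
      unfold pt
      rw [if_neg]
      rintro rfl
      simp at h'
  · rw [Function.update_of_ne h]
    rcases cases_strat Shat j t with ⟨b, rfl⟩ | h'
    · rw [lift_emb, lift_emb, Function.update_of_ne h]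
    · rw [lift_none _ _ _ _ h', lift_none _ _ _ _ h']

end big

/-! ### Equilibria of the constructed game -/

section main

variable {k n m : ℕ} (Shat : Player k → Type) [∀ i, Fintype (Shat i)] [∀ i, Nonempty (Shat i)]
  (Uhat : (i : Player k) → (∀ j, Shat j) → ℝ) (Cl : Fin m → Finset (Lit n))

lemma gadget_pos (hWL : ∀ i s, Uhat i s = 0 ∨ Uhat i s = 1)
    (hPUP : ∀ (i : Player k) (s : ∀ j, Shat j), ∃ t, 0 < Uhat i (Function.update s i t))
    (σ : ∀ i, Strat Shat n m i → ℝ) (hσ : ∀ j s, 0 ≤ σ j s) (i : Player k)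
    (s : ∀ j, Strat Shat n m j) (hs : ∀ j, j ≠ i → 0 < σ j (s j))
    (h : (∃ j, j ≠ i ∧ (toGadget Shat j (s j)).isSome = true) ∨
      (∃ p, i = .inl p ∧ allowedB (specialOf Shat (otherP p) s) = true)) :
    ∃ a, 0 < PU (BigU Shat Uhat Cl) σ i (emb Shat i a) := by
  by_cases hall : ∀ j, j ≠ i → (toGadget Shat j (s j)).isSome = true
  · have : ∀ j, ∃ a : Shat j, j ≠ i → s j = emb Shat j a := by
      intro j
      by_cases hj : j = i
      · exact ⟨Classical.arbitrary _, fun h => absurd hj h⟩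
      · obtain ⟨a, ha⟩ := Option.isSome_iff_exists.1 (hall j hj)
        exact ⟨a, fun _ => emb_of_toGadget Shat j _ a ha⟩
    choose s' hs' using this
    obtain ⟨t, ht⟩ := hPUP i s'
    refine ⟨t, PU_pos _ (BigU_nonneg Shat Uhat Cl hWL) σ hσ i _
      (fun j => emb Shat j (Function.update s' i t j)) ?_ ?_ ?_⟩
    · simp
    · intro j hj
      rw [Function.update_of_ne hj, ← hs' j hj]
      exact hs j hj
    · rw [BigU_all]; exact ht
  · let a : Shat i := Classical.arbitrary _
    refine ⟨a, PU_pos _ (BigU_nonneg Shat Uhat Cl hWL) σ hσ i _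
      (Function.update s i (emb Shat i a)) (by simp) ?_ ?_⟩
    · intro j hj
      rw [Function.update_of_ne hj]
      exact hs j hj
    · rw [BigU_one]
      · norm_num
      · simp
      · intro hc
        apply hall
        intro j hj
        have := hc j
        rwa [Function.update_of_ne hj] at this
      · rcases h with ⟨j, hj, hj'⟩ | ⟨p, rfl, hp⟩
        · left
          refine ⟨j, hj, ?_⟩
          rwa [Function.update_of_ne hj]
        · right
          refine ⟨p, rfl, ?_⟩
          unfold specialOf at hp ⊢
          rwa [Function.update_of_ne]
          intro h
          have := Sum.inl.inj h
          fin_cases p <;> simp [otherP] at this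

lemma no_zero (σ : ∀ i, Strat Shat n m i → ℝ) (hN : IsNashEq (BigU Shat Uhat Cl) σ)
    (i : Player k) (t t' : Strat Shat n m i) (ht : 0 < σ i t)
    (h0 : PU (BigU Shat Uhat Cl) σ i t = 0) (h1 : 0 < PU (BigU Shat Uhat Cl) σ i t') : False := by
  have := nash_best _ σ hN i t t' ht
  linarith

/-- If one player uses a non-gadget strategy, then so do all players. -/
lemma all_none (hWL : ∀ i s, Uhat i s = 0 ∨ Uhat i s = 1)
    (hPUP : ∀ (i : Player k) (s : ∀ j, Shat j), ∃ t, 0 < Uhat i (Function.update s i t))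
    (σ : ∀ i, Strat Shat n m i → ℝ) (hN : IsNashEq (BigU Shat Uhat Cl) σ)
    (i : Player k) (t : Strat Shat n m i) (ht : 0 < σ i t) (htn : toGadget Shat i t = none)
    (j : Player k) : ∃ t', 0 < σ j t' ∧ toGadget Shat j t' = none := by
  by_cases hji : j = i
  · subst hji; exact ⟨t, ht, htn⟩
  by_contra hc
  push Not at hc
  have hσ : ∀ j s, 0 ≤ σ j s := fun j => (hN.1 j).1
  choose s hs using fun j => dist_exists_pos _ (hN.1 j)
  obtain ⟨a, ha⟩ := gadget_pos Shat Uhat Cl hWL hPUP σ hσ i s (fun j _ => hs j)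
    (Or.inl ⟨j, hji, by
      rw [Option.isSome_iff_ne_none]; exact hc _ (hs j)⟩)
  refine no_zero Shat Uhat Cl σ hN i t _ ht ?_ ha
  apply PU_zero
  intro s' h1 h2
  apply BigU_none Shat Uhat Cl i j s'
  · rw [h1]; exact htn
  · rw [Option.isSome_iff_ne_none]
    exact hc _ (lt_of_le_of_ne (hσ _ _) (h2 j hji).symm)

/-- A special player facing an opponent that uses a non-gadget strategy: the opponent's
opponent must use literals. -/
lemma uses_lit (hWL : ∀ i s, Uhat i s = 0 ∨ Uhat i s = 1)
    (hPUP : ∀ (i : Player k) (s : ∀ j, Shat j), ∃ t, 0 < Uhat i (Function.update s i t))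
    (σ : ∀ i, Strat Shat n m i → ℝ) (hN : IsNashEq (BigU Shat Uhat Cl) σ)
    (p : Fin 2) (t : Strat Shat n m (.inl p)) (ht : 0 < σ (.inl p) t)
    (htn : toGadget Shat (.inl p) t = none) :
    ∃ l : Lit n, 0 < σ (.inl (otherP p)) (Sum.inr (Sum.inl l)) := by
  by_contra hc
  push Not at hc
  have hne : (Sum.inl (otherP p) : Player k) ≠ Sum.inl p := by
    intro h
    have := Sum.inl.inj h
    fin_cases p <;> simp [otherP] at this
  have hσ : ∀ j s, 0 ≤ σ j s := fun j => (hN.1 j).1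
  choose s hs using fun j => dist_exists_pos _ (hN.1 j)
  have hcond : (∃ j, j ≠ Sum.inl p ∧ (toGadget Shat j (s j)).isSome = true) ∨
      (∃ p', (Sum.inl p : Player k) = .inl p' ∧
        allowedB (specialOf Shat (otherP p') s) = true) := by
    rcases hs' : s (.inl (otherP p)) with a | l | c
    · left
      refine ⟨_, hne, ?_⟩
      rw [hs']; rfl
    · exfalso
      have := hs (.inl (otherP p))
      rw [hs'] at this
      exact absurd this (not_lt.2 (hc l))
    · right
      refine ⟨p, rfl, ?_⟩
      unfold specialOf
      rw [hs']; rfl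
  obtain ⟨g, hgp⟩ := gadget_pos Shat Uhat Cl hWL hPUP σ hσ (.inl p) s (fun j _ => hs j) hcond
  refine no_zero Shat Uhat Cl σ hN (.inl p) t _ ht ?_ hgp
  clear hgp g
  apply PU_zero
  intro s' h1 h2
  by_cases hg : ∃ j, (toGadget Shat j (s' j)).isSome = true
  · obtain ⟨j, hj⟩ := hg
    exact BigU_none Shat Uhat Cl _ j s' (by rw [h1]; exact htn) hj
  · push Not at hg
    obtain ⟨a, b, hab, ha, hb⟩ := eq_prof Shat s' (fun j => by simpa using hg j)
    have h3 := h2 _ hne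
    fin_cases p
    · have hb' : s' (.inl (otherP 0)) = Sum.inr b := hb
      change BigU Shat Uhat Cl (.inl 0) s' = 0
      rw [hab, (BigU_prof Shat Uhat Cl a b).1]
      change σ (.inl (otherP 0)) (s' (.inl (otherP 0))) ≠ 0 at h3
      rw [hb'] at h3
      rcases b with l | c
      · exact absurd (le_antisymm (hc l) (hσ _ _)) h3
      · rcases a with a | a | a <;> rcases c with c | c <;> simp only [pairU] <;>
          (try split_ifs) <;> rfl
    · have ha' : s' (.inl (otherP 1)) = Sum.inr a := ha
      change BigU Shat Uhat Cl (.inl 1) s' = 0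
      rw [hab, (BigU_prof Shat Uhat Cl a b).2]
      change σ (.inl (otherP 1)) (s' (.inl (otherP 1))) ≠ 0 at h3
      rw [ha'] at h3
      rcases a with l | c
      · exact absurd (le_antisymm (hc l) (hσ _ _)) h3
      · rcases b with a | a | a <;> rcases c with c | c <;> simp only [pairU] <;>
          (try split_ifs) <;> rfl

lemma PU_special0 (σ : ∀ i, Strat Shat n m i → ℝ) (a : SpecialAux n m) :
    PU (BigU Shat Uhat Cl) σ (.inl 0) (Sum.inr a) =
      (∏ q, σ (.inr q) (Sum.inr PUnit.unit)) *
        pay1 Cl (fun b => σ (.inl 1) (Sum.inr b)) a := by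
  unfold PU EU pay1
  rw [Finset.mul_sum]
  symm
  refine Fintype.sum_of_injective (fun b => prof Shat a b) ?_ _ _ ?_ ?_
  · intro b b' h
    exact Sum.inr.inj (congrFun h (.inl 1))
  · intro s hs
    rw [prod_update]
    by_cases h1 : s (.inl 0) = Sum.inr a
    · by_cases hg : ∃ j, (toGadget Shat j (s j)).isSome = true
      · obtain ⟨j, hj⟩ := hg
        rw [BigU_none Shat Uhat Cl _ j s (by rw [h1]; rfl) hj, mul_zero]
      · push Not at hg
        obtain ⟨a', b, hab, ha, hb⟩ := eq_prof Shat s (fun j => by simpa using hg j)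
        rw [h1] at ha
        have := Sum.inr.inj ha
        subst this
        exact absurd ⟨b, hab.symm⟩ hs
    · simp [pt, h1]
  · intro b
    rw [(BigU_prof Shat Uhat Cl a b).1, Fintype.prod_sum_type, Fin.prod_univ_two,
      Function.update_self, Function.update_of_ne (by simp)]
    have e : ∏ q, (Function.update σ (.inl 0) (pt (Sum.inr a))) (.inr q)
        (prof Shat a b (.inr q)) = ∏ q, σ (.inr q) (Sum.inr PUnit.unit) := by
      apply Finset.prod_congr rfl
      intro q _
      rw [Function.update_of_ne (by simp)]
      rfl
    rw [e]
    have e1 : pt (Sum.inr a : Strat Shat n m (.inl 0)) (prof Shat a b (.inl 0)) = 1 := if_pos rfl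
    trans 1 * σ (.inl 1) (Sum.inr b) * (∏ q, σ (.inr q) (Sum.inr PUnit.unit)) * (pairU Cl a b).1
    · ring
    · exact congrArg (fun z => z * σ (.inl 1) (Sum.inr b) *
        (∏ q, σ (.inr q) (Sum.inr PUnit.unit)) * (pairU Cl a b).1) e1.symm

lemma PU_special1 (σ : ∀ i, Strat Shat n m i → ℝ) (b : SpecialAux n m) :
    PU (BigU Shat Uhat Cl) σ (.inl 1) (Sum.inr b) =
      (∏ q, σ (.inr q) (Sum.inr PUnit.unit)) *
        pay2 Cl (fun a => σ (.inl 0) (Sum.inr a)) b := by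
  unfold PU EU pay2
  rw [Finset.mul_sum]
  symm
  refine Fintype.sum_of_injective (fun a => prof Shat a b) ?_ _ _ ?_ ?_
  · intro a a' h
    exact Sum.inr.inj (congrFun h (.inl 0))
  · intro s hs
    rw [prod_update]
    by_cases h1 : s (.inl 1) = Sum.inr b
    · by_cases hg : ∃ j, (toGadget Shat j (s j)).isSome = true
      · obtain ⟨j, hj⟩ := hg
        rw [BigU_none Shat Uhat Cl _ j s (by rw [h1]; rfl) hj, mul_zero]
      · push Not at hg
        obtain ⟨a, b', hab, ha, hb⟩ := eq_prof Shat s (fun j => by simpa using hg j)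
        rw [h1] at hb
        have := Sum.inr.inj hb
        subst this
        exact absurd ⟨a, hab.symm⟩ hs
    · simp [pt, h1]
  · intro a
    rw [(BigU_prof Shat Uhat Cl a b).2, Fintype.prod_sum_type, Fin.prod_univ_two,
      Function.update_self, Function.update_of_ne (by simp)]
    have e : ∏ q, (Function.update σ (.inl 1) (pt (Sum.inr b))) (.inr q)
        (prof Shat a b (.inr q)) = ∏ q, σ (.inr q) (Sum.inr PUnit.unit) := by
      apply Finset.prod_congr rfl
      intro q _
      rw [Function.update_of_ne (by simp)]
      rfl
    rw [e]
    have e1 : pt (Sum.inr b : Strat Shat n m (.inl 1)) (prof Shat a b (.inl 1)) = 1 := if_pos rfl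
    trans σ (.inl 0) (Sum.inr a) * 1 * (∏ q, σ (.inr q) (Sum.inr PUnit.unit)) * (pairU Cl a b).2.1
    · ring
    · exact congrArg (fun z => σ (.inl 0) (Sum.inr a) * z *
        (∏ q, σ (.inr q) (Sum.inr PUnit.unit)) * (pairU Cl a b).2.1) e1.symm

lemma gadget_only (hn : 4 ≤ n) (hWL : ∀ i s, Uhat i s = 0 ∨ Uhat i s = 1)
    (hPUP : ∀ (i : Player k) (s : ∀ j, Shat j), ∃ t, 0 < Uhat i (Function.update s i t))
    (h3 : ∀ c, (Cl c).card = 3) (hunsat : ¬ ∃ γ : Fin n → Bool, Satisfies Cl γ)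
    (σ : ∀ i, Strat Shat n m i → ℝ) (hN : IsNashEq (BigU Shat Uhat Cl) σ)
    (i : Player k) (t : Strat Shat n m i) (htn : toGadget Shat i t = none) : σ i t = 0 := by
  have hσ : ∀ j s, 0 ≤ σ j s := fun j => (hN.1 j).1
  by_contra hne
  have hall := all_none Shat Uhat Cl hWL hPUP σ hN i t (lt_of_le_of_ne (hσ _ _) (Ne.symm hne)) htn
  have hl : ∀ p, ∃ l : Lit n, 0 < σ (.inl (otherP p)) (Sum.inr (Sum.inl l)) := by
    intro p
    obtain ⟨t', h1, h2⟩ := hall (.inl p)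
    exact uses_lit Shat Uhat Cl hWL hPUP σ hN p t' h1 h2
  have hD : 0 < ∏ q, σ (.inr q) (Sum.inr PUnit.unit) := by
    apply Finset.prod_pos
    intro q _
    obtain ⟨t', h1, h2⟩ := hall (.inr q)
    rcases t' with a | a
    · simp [toGadget] at h2
    · exact h1
  refine core hn Cl h3 hunsat (fun a => σ (.inl 0) (Sum.inr a)) (fun a => σ (.inl 1) (Sum.inr a))
    (fun a => hσ _ _) (fun a => hσ _ _) (hl 1) (hl 0) ?_ ?_
  · intro a a' ha
    have := nash_best _ σ hN (.inl 0) (Sum.inr a) (Sum.inr a') ha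
    rw [PU_special0, PU_special0] at this
    exact le_of_mul_le_mul_left this hD
  · intro a a' ha
    have := nash_best _ σ hN (.inl 1) (Sum.inr a) (Sum.inr a') ha
    rw [PU_special1, PU_special1] at this
    exact le_of_mul_le_mul_left this hD

end main

/-- For the win-lose game `G = G(Ĝ, φ)` built from an `r`-player win-lose gadget game
`Ĝ` with the positive utility property and a 3SAT formula `φ` with `n ≥ 4` variables:
if `φ` is unsatisfiable, then the Nash equilibria of `G` are exactly the Nash
equilibria of `Ĝ` (identified with mixed profiles of `G` supported on gadget
strategies). -/
theorem reduction_unsatisfiable_nash_equivalence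
    {k n m : ℕ} (hn : 4 ≤ n)
    (Shat : Player k → Type) [∀ i, Fintype (Shat i)] [∀ i, Nonempty (Shat i)]
    (Uhat : (i : Player k) → (∀ j, Shat j) → ℝ)
    (hWL : ∀ i s, Uhat i s = 0 ∨ Uhat i s = 1)
    (hPUP : ∀ (i : Player k) (s : ∀ j, Shat j), ∃ t, 0 < Uhat i (Function.update s i t))
    (Cl : Fin m → Finset (Lit n)) (h3 : ∀ c, (Cl c).card = 3)
    (hunsat : ¬ ∃ γ : Fin n → Bool, Satisfies Cl γ) :
    ∀ σ : ∀ i, Strat Shat n m i → ℝ,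
      IsNashEq (BigU Shat Uhat Cl) σ ↔
        ∃ σh : ∀ i, Shat i → ℝ, IsNashEq Uhat σh ∧ σ = liftProfile Shat σh := by
  intro σ
  constructor
  · intro hN
    have hz := gadget_only Shat Uhat Cl hn hWL hPUP h3 hunsat σ hN
    have hσ : σ = liftProfile Shat (fun i a => σ i (emb Shat i a)) := by
      funext i t
      rcases cases_strat Shat i t with ⟨a, rfl⟩ | h
      · rw [lift_emb]
      · rw [lift_none _ _ _ _ h, hz i t h]
    refine ⟨fun i a => σ i (emb Shat i a), ?_, hσ⟩
    generalize (fun i a => σ i (emb Shat i a)) = σh at hσ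
    subst hσ
    apply nash_of_pure
    · intro i
      exact (lift_dist Shat σh i).1 (hN.1 i)
    · intro i a
      rw [← PU_lift Shat Uhat Cl, ← EU_lift Shat Uhat Cl]
      exact nash_pure _ _ hN i _
  · rintro ⟨σh, hN, rfl⟩
    apply nash_of_pure
    · intro i
      exact (lift_dist Shat σh i).2 (hN.1 i)
    · intro i t
      rw [EU_lift]
      rcases cases_strat Shat i t with ⟨a, rfl⟩ | h
      · rw [PU_lift]
        exact nash_pure _ _ hN i a
      · rw [PU_zero]
        · apply Finset.sum_nonneg
          intro s _
          apply mul_nonneg (Finset.prod_nonneg fun j _ => (hN.1 j).1 _)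
          rcases hWL i s with h' | h' <;> rw [h'] <;> norm_num
        · intro s h1 h2
          have hj : ∃ j : Player k, j ≠ i := by
            rcases i with p | q
            · exact ⟨.inl (otherP p), by
                intro e
                have := Sum.inl.inj e
                fin_cases p <;> simp [otherP] at this⟩
            · exact ⟨.inl 0, by simp⟩
          obtain ⟨j, hj⟩ := hj
          refine BigU_none Shat Uhat Cl i j s (by rw [h1]; exact h) ?_
          rw [Option.isSome_iff_ne_none]
          intro hn'
          exact h2 j hj (lift_none _ _ _ _ hn')
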